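/- arXiv:2602.17115 — 2 statements merged into one kernel-verified Lean document; each statement's English description precedes it below -/
import Mathlib

section
/- Fix a matrix X and let ω_1,…,ω_n be i.i.d. Bernoulli(π), π ∈ (0,1]. Let f* and the countable class G consist of functions from R^{n×d} to R^n with all components bounded in sup-norm by F > 0, and suppose log|G| ≥ 1. Set α = 6/5 and ν = 3600 F² log|G| / π. For ℓ ∈ N define S_ℓ = { f ∈ G : α^{ℓ−1} ν < n‖f − f*‖_n² ≤ α^ℓ ν } and Z_ℓ = sup_{f ∈ S_ℓ} ( π‖f − f*‖_n² − ‖f − f*‖²_{n,ω} ). Then for every ℓ ∈ N: P( Z_ℓ > π ν α^{ℓ−1} / (2n) ) ≤ exp( −5.6 α^ℓ log|G| ). -/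
/-!
For a single `f` put `g i = (f X i - fstar X i) ^ 2 ∈ [0, 4F²]`. A Bernoulli(π) variable satisfies
`E exp (s (π - ω)) ≤ exp (π s²)` for `s ≥ 0` (`bern_mgf_le`), so by independence and Markov's
inequality `P (∑ (π - ω i) g i ≥ t) ≤ exp (-c t + π c² · 4F² · ∑ g i)` for every `c ≥ 0`
(`chernoff`). On the shell `S_ℓ` one has `∑ g i ≤ α^ℓ ν`; with `t = π ν α^(ℓ-1) / 2` and
`c = 1 / (20 F²)` the exponent is `-39 α^ℓ log |G|`, and the union bound over `G` costs only a
factor `|G| = exp (log |G|)`.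
-/


open MeasureTheory Finset

noncomputable section

/-- Bernoulli(π) distribution on ℝ: mass `π` at `1` and `1−π` at `0`. -/
def bern (p : ℝ) : Measure ℝ :=
  ENNReal.ofReal p • Measure.dirac 1 + ENNReal.ofReal (1 - p) • Measure.dirac 0

instance bern_isFinite (p : ℝ) : IsFiniteMeasure (bern p) := by
  refine ⟨?_⟩
  simp [bern, ENNReal.ofReal_lt_top]

lemma integrable_bern (p : ℝ) (h : ℝ → ℝ) : Integrable h (bern p) := by
  unfold bern
  refine Integrable.add_measure ?_ ?_ <;>
  · refine Integrable.smul_measure ?_ ENNReal.ofReal_ne_top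
    exact integrable_dirac (by simp)

lemma integral_bern {p : ℝ} (hp₀ : 0 ≤ p) (hp₁ : p ≤ 1) {h : ℝ → ℝ} :
    ∫ x, h x ∂(bern p) = p * h 1 + (1 - p) * h 0 := by
  unfold bern
  rw [integral_add_measure, integral_smul_measure, integral_smul_measure, integral_dirac,
    integral_dirac, ENNReal.toReal_ofReal hp₀, ENNReal.toReal_ofReal (by linarith)]
  · simp
  · exact (integrable_dirac (by simp)).smul_measure ENNReal.ofReal_ne_top
  · exact (integrable_dirac (by simp)).smul_measure ENNReal.ofReal_ne_top

/-- Only the lower tail is needed, so no upper bound on `s` is required: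
`exp (-s) ≤ 1 / (1 + s) ≤ 1 - s + s ^ 2` for all `s ≥ 0`. -/
lemma bern_mgf_le {p : ℝ} (hp₀ : 0 ≤ p) (hp₁ : p ≤ 1) {s : ℝ} (hs : 0 ≤ s) :
    ∫ x, Real.exp (s * (p - x)) ∂(bern p) ≤ Real.exp (p * s ^ 2) := by
  rw [integral_bern hp₀ hp₁]
  have h1 : Real.exp (-s) ≤ 1 - s + s ^ 2 := by
    rw [Real.exp_neg]
    have h2 : (Real.exp s)⁻¹ ≤ (s + 1)⁻¹ :=
      inv_anti₀ (by linarith) (Real.add_one_le_exp s)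
    refine h2.trans ?_
    rw [inv_le_iff_one_le_mul₀ (by linarith)]
    nlinarith [pow_nonneg hs 3]
  have e1 : Real.exp (s * (p - 1)) = Real.exp (s * p) * Real.exp (-s) := by
    rw [← Real.exp_add]; ring_nf
  have e2 : Real.exp (p * s ^ 2) = Real.exp (s * p) * Real.exp (p * (s ^ 2 - s)) := by
    rw [← Real.exp_add]; ring_nf
  rw [e1, e2, sub_zero]
  have h3 := Real.add_one_le_exp (p * (s ^ 2 - s))
  have h4 : p * Real.exp (-s) ≤ p * (1 - s + s ^ 2) := mul_le_mul_of_nonneg_left h1 hp₀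
  calc p * (Real.exp (s * p) * Real.exp (-s)) + (1 - p) * Real.exp (s * p)
      = Real.exp (s * p) * (p * Real.exp (-s) + (1 - p)) := by ring
    _ ≤ _ := mul_le_mul_of_nonneg_left (by linarith) (Real.exp_pos _).le

/-- Lower-tail Chernoff bound for a weighted sum of independent Bernoulli(p) variables, with weights
in `[0, B]` and a free parameter `c`. -/
lemma chernoff {n : ℕ} {p : ℝ} (hp₀ : 0 ≤ p) (hp₁ : p ≤ 1) (g : Fin n → ℝ) {B : ℝ}
    (hg₀ : ∀ i, 0 ≤ g i) (hgB : ∀ i, g i ≤ B) {c : ℝ} (hc : 0 ≤ c) (t : ℝ) :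
    (Measure.pi fun _ : Fin n => bern p) {ω | t ≤ ∑ i, (p - ω i) * g i} ≤
      ENNReal.ofReal (Real.exp (-c * t + p * c ^ 2 * B * ∑ i, g i)) := by
  set μ := Measure.pi fun _ : Fin n => bern p
  set Y : (Fin n → ℝ) → ℝ := fun ω => ∏ i, Real.exp (c * g i * (p - ω i)) with hY
  have hYint : Integrable Y μ :=
    Integrable.fintype_prod (f := fun i x => Real.exp (c * g i * (p - x)))
      fun i => integrable_bern p _
  have hYle : ∫ ω, Y ω ∂μ ≤ Real.exp (p * c ^ 2 * B * ∑ i, g i) := by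
    rw [hY, integral_fintype_prod_eq_prod (fun i x => Real.exp (c * g i * (p - x))),
      Finset.mul_sum, Real.exp_sum]
    refine Finset.prod_le_prod (fun i _ => integral_nonneg fun x => (Real.exp_pos _).le) ?_
    intro i _
    refine (bern_mgf_le hp₀ hp₁ (mul_nonneg hc (hg₀ i))).trans (Real.exp_le_exp.2 ?_)
    have h1 : g i * g i ≤ B * g i := mul_le_mul_of_nonneg_right (hgB i) (hg₀ i)
    have h2 := mul_le_mul_of_nonneg_left h1 (mul_nonneg hp₀ (sq_nonneg c))
    nlinarith
  have hYeq : ∀ ω, Y ω = Real.exp (c * ∑ i, (p - ω i) * g i) := by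
    intro ω
    simp only [hY]
    rw [← Real.exp_sum, Finset.mul_sum]
    congr 1
    exact Finset.sum_congr rfl fun i _ => by ring
  have hsub : {ω | t ≤ ∑ i, (p - ω i) * g i} ⊆ {ω | Real.exp (c * t) ≤ Y ω} := by
    intro ω hω
    simp only [Set.mem_ofPred_eq] at hω ⊢
    rw [hYeq]
    exact Real.exp_le_exp.2 (mul_le_mul_of_nonneg_left hω hc)
  refine (measure_mono hsub).trans ?_
  have hM := mul_meas_ge_le_integral_of_nonneg
    (Filter.Eventually.of_forall fun ω => by rw [hYeq]; exact (Real.exp_pos _).le)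
    hYint (Real.exp (c * t))
  rw [ENNReal.le_ofReal_iff_toReal_le (measure_ne_top _ _) (Real.exp_pos _).le, Real.exp_add,
    neg_mul, Real.exp_neg, inv_mul_eq_div, le_div_iff₀ (Real.exp_pos _), mul_comm]
  exact hM.trans hYle

/-- peeling-shell concentration. With `α = 6/5`, `ν = 3600F²log|G|/π`,
`S_ℓ = {f ∈ G : α^{ℓ−1}ν < n‖f−f*‖_n² ≤ α^ℓ ν}` and
`Z_ℓ = sup_{f∈S_ℓ} (π‖f−f*‖_n² − ‖f−f*‖²_{n,ω})`, one has
`P(Z_ℓ > πνα^{ℓ−1}/(2n)) ≤ exp(−5.6 α^ℓ log|G|)` for every `ℓ ≥ 1`. -/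
theorem stmt_8 (n d : ℕ) (hn : 1 ≤ n) (π : ℝ) (hπ₀ : 0 < π) (hπ₁ : π ≤ 1)
    (X : Fin n → Fin d → ℝ)
    (G : Finset ((Fin n → Fin d → ℝ) → Fin n → ℝ))
    (fstar : (Fin n → Fin d → ℝ) → Fin n → ℝ)
    (F : ℝ) (hF : 0 < F)
    (hbdG : ∀ f ∈ G, ∀ (x : Fin n → Fin d → ℝ) (i : Fin n), |f x i| ≤ F)
    (hbdstar : ∀ (x : Fin n → Fin d → ℝ) (i : Fin n), |fstar x i| ≤ F)
    (hlog : 1 ≤ Real.log G.card)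
    (α ν : ℝ) (hα : α = 6 / 5) (hν : ν = 3600 * F ^ 2 * Real.log G.card / π) :
    ∀ ℓ : ℕ, 1 ≤ ℓ →
      (Measure.pi fun _ : Fin n => bern π) {ω : Fin n → ℝ |
        (⨆ f ∈ {f | f ∈ G ∧
              α ^ (ℓ - 1) * ν < n * ((1 / (n : ℝ)) * ∑ i, (f X i - fstar X i) ^ 2) ∧
              n * ((1 / (n : ℝ)) * ∑ i, (f X i - fstar X i) ^ 2) ≤ α ^ ℓ * ν},
            (π * ((1 / (n : ℝ)) * ∑ i, (f X i - fstar X i) ^ 2) -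
              (1 / (n : ℝ)) * ∑ i, ω i * (f X i - fstar X i) ^ 2)) >
          π * ν * α ^ (ℓ - 1) / (2 * n)} ≤
        ENNReal.ofReal (Real.exp (-5.6 * α ^ ℓ * Real.log G.card)) := by
  intro ℓ hℓ
  obtain ⟨k, rfl⟩ : ∃ k, ℓ = k + 1 := ⟨ℓ - 1, by omega⟩
  rw [Nat.add_sub_cancel]
  set L := Real.log G.card with hL
  have hn' : (0 : ℝ) < n := by exact_mod_cast hn
  have hα1 : (1 : ℝ) ≤ α ^ k := one_le_pow₀ (by rw [hα]; norm_num)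
  have hν0 : 0 < ν := by rw [hν]; positivity
  have hcancel : ∀ x : ℝ, (n : ℝ) * ((1 / (n : ℝ)) * x) = x := fun x => by field_simp
  simp only [hcancel]
  set μ := Measure.pi fun _ : Fin n => bern π
  set g : ((Fin n → Fin d → ℝ) → Fin n → ℝ) → Fin n → ℝ :=
    fun f i => (f X i - fstar X i) ^ 2 with hg
  set t := π * ν * α ^ k / 2 with ht
  classical
  set S := G.filter fun f => ∑ i, g f i ≤ α ^ (k + 1) * ν with hS
  have hsub : {ω : Fin n → ℝ |
        (⨆ f ∈ {f | f ∈ G ∧ α ^ k * ν < ∑ i, (f X i - fstar X i) ^ 2 ∧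
              ∑ i, (f X i - fstar X i) ^ 2 ≤ α ^ (k + 1) * ν},
            (π * ((1 / (n : ℝ)) * ∑ i, (f X i - fstar X i) ^ 2) -
              (1 / (n : ℝ)) * ∑ i, ω i * (f X i - fstar X i) ^ 2)) >
          π * ν * α ^ k / (2 * n)} ⊆ ⋃ f ∈ S, {ω | t ≤ ∑ i, (π - ω i) * g f i} := by
    intro ω hω
    by_contra hcon
    simp only [Set.mem_iUnion, Set.mem_ofPred_eq, not_exists, not_le] at hcon
    rw [Set.mem_ofPred_eq] at hω
    refine absurd hω (not_lt.2 ?_)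
    -- the threshold is nonnegative, so the value `0` of a supremum over an empty index is harmless
    have hthr : 0 ≤ π * ν * α ^ k / (2 * n) := by positivity
    refine Real.iSup_le (fun f => Real.iSup_le (fun hf => ?_) hthr) hthr
    have h := hcon f (Finset.mem_filter.2 ⟨hf.1, hf.2.2⟩)
    have e : π * ((1 / (n : ℝ)) * ∑ i, (f X i - fstar X i) ^ 2) -
        (1 / (n : ℝ)) * ∑ i, ω i * (f X i - fstar X i) ^ 2 =
        (∑ i, (π - ω i) * g f i) / n := by
      simp only [hg, sub_mul, Finset.sum_sub_distrib, ← Finset.mul_sum]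
      ring
    have e' : π * ν * α ^ k / (2 * n) = t / n := by rw [ht]; field_simp
    rw [e, e']
    exact div_le_div_of_nonneg_right h.le hn'.le
  refine (measure_mono hsub).trans ((measure_biUnion_finset_le _ _).trans ?_)
  have hone : ∀ f ∈ S, μ {ω | t ≤ ∑ i, (π - ω i) * g f i} ≤
      ENNReal.ofReal (Real.exp (-39 * α ^ (k + 1) * L)) := by
    intro f hf
    obtain ⟨hfG, hfS⟩ := Finset.mem_filter.1 hf
    have hgB : ∀ i, g f i ≤ 4 * F ^ 2 := by
      intro i
      have h1 := abs_le.1 (hbdG f hfG X i)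
      have h2 := abs_le.1 (hbdstar X i)
      have h3 : |f X i - fstar X i| ≤ 2 * F := abs_le.2 ⟨by linarith, by linarith⟩
      calc (f X i - fstar X i) ^ 2 ≤ (2 * F) ^ 2 := sq_le_sq' (abs_le.1 h3).1 (abs_le.1 h3).2
        _ = 4 * F ^ 2 := by ring
    refine (chernoff hπ₀.le hπ₁ (g f) (fun i => sq_nonneg _) hgB
      (c := 1 / (20 * F ^ 2)) (by positivity) t).trans ?_
    refine ENNReal.ofReal_le_ofReal (Real.exp_le_exp.2 ?_)
    have h1 : π * (1 / (20 * F ^ 2)) ^ 2 * (4 * F ^ 2) * ∑ i, g f i ≤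
        π * (1 / (20 * F ^ 2)) ^ 2 * (4 * F ^ 2) * (α ^ (k + 1) * ν) :=
      mul_le_mul_of_nonneg_left hfS (by positivity)
    refine (add_le_add_right h1 _).trans (le_of_eq ?_)
    rw [ht, hν, pow_succ α k, hα]
    field_simp
    ring
  refine (Finset.sum_le_sum hone).trans ?_
  rw [Finset.sum_const, nsmul_eq_mul]
  have hG0 : (0 : ℝ) < G.card := by
    by_contra h
    have h0 : (G.card : ℝ) = 0 := le_antisymm (not_lt.1 h) (Nat.cast_nonneg _)
    rw [hL, h0, Real.log_zero] at hlog
    linarith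
  have hcard : (S.card : ℝ) ≤ Real.exp L := by
    rw [hL, Real.exp_log hG0]
    exact_mod_cast Finset.card_filter_le _ _
  rw [← ENNReal.ofReal_natCast, ← ENNReal.ofReal_mul (Nat.cast_nonneg _)]
  refine ENNReal.ofReal_le_ofReal
    ((mul_le_mul_of_nonneg_right hcard (Real.exp_pos _).le).trans ?_)
  rw [← Real.exp_add]
  refine Real.exp_le_exp.2 ?_
  have hα2 : (1 : ℝ) ≤ α ^ (k + 1) := one_le_pow₀ (by rw [hα]; norm_num)
  nlinarith [mul_le_mul_of_nonneg_right hα2 (by linarith : (0 : ℝ) ≤ L)]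

end
end

section
/- Let G(L₁,T) be the linear GCN class. If g, h ∈ G(L₁,T) have weight matrices W_ℓ^g, W_ℓ^h and reweighting coefficients γ_ℓ^g, γ_ℓ^h satisfying ‖W_ℓ^g − W_ℓ^h‖_∞ ≤ ε and |γ_ℓ^g − γ_ℓ^h| ≤ ε for all ℓ ∈ {1,…,L₁}, then for every x ∈ [0,1]^{n×d}: ‖g(x) − h(x)‖_∞ ≤ (L₁² + L₁) (‖T‖_{1,∞} ∨ 1)^{L₁} d^{L₁} ε. -/
/-!
The estimate is obtained summand by summand. Put `M = max ‖T‖_{1,∞} 1`. Multiplying on the left by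
`T` enlarges the entrywise maximum norm by a factor at most `M`, so the entries of `T ^ ℓ * x` are
at most `M ^ ℓ` (`abs_pow_mul_le`). Multiplying on the right by a `d × d` matrix whose entries are at
most `c` enlarges it by a factor at most `d * c` (`abs_mul_le_card`). Hence the entries of
`T ^ ℓ * x * W₁ ⋯ W_ℓ` are at most `M ^ ℓ * d ^ ℓ` (`abs_mul_wProd_le`), and replacing the weights one
at a time costs `M ^ ℓ * d ^ ℓ * ε` per factor, that is `ℓ * M ^ ℓ * d ^ ℓ * ε` in total
(`abs_mul_wProd_sub_le`). The change of `γ_ℓ` contributes another `M ^ ℓ * d ^ ℓ * ε`, so each of the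
`L₁` summands changes by at most `(L₁ + 1) * M ^ L₁ * d ^ L₁ * ε`.
-/

open Finset

/-- Maximum absolute row sum `‖M‖_{1,∞}`. -/
noncomputable def rowSumNorm {n m : ℕ} (M : Matrix (Fin n) (Fin m) ℝ) : ℝ :=
  ⨆ i, ∑ j, |M i j|

/-- Ordered product of weight matrices `W₁ ⋯ W_ℓ`. -/
noncomputable def wProd {d : ℕ} (W : ℕ → Matrix (Fin d) (Fin d) ℝ) (ℓ : ℕ) :
    Matrix (Fin d) (Fin d) ℝ :=
  ((List.range ℓ).map fun i => W (i + 1)).prod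

/-- A member of the linear GCN class `G(L₁,T)`:
`x ↦ Σ_{ℓ=1}^{L₁} γ_ℓ T^ℓ x W₁⋯W_ℓ`. -/
noncomputable def gcnFun {n d : ℕ} (T : Matrix (Fin n) (Fin n) ℝ) (γ : ℕ → ℝ)
    (W : ℕ → Matrix (Fin d) (Fin d) ℝ) (L₁ : ℕ) (x : Matrix (Fin n) (Fin d) ℝ) :
    Matrix (Fin n) (Fin d) ℝ :=
  ∑ ℓ ∈ Finset.Icc 1 L₁, γ ℓ • (T ^ ℓ * x * wProd W ℓ)

lemma wProd_succ {d : ℕ} (W : ℕ → Matrix (Fin d) (Fin d) ℝ) (k : ℕ) :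
    wProd W (k + 1) = wProd W k * W (k + 1) := by
  simp [wProd, List.range_succ]

lemma rowSum_le_rowSumNorm {n m : ℕ} (M : Matrix (Fin n) (Fin m) ℝ) (i : Fin n) :
    ∑ j, |M i j| ≤ rowSumNorm M :=
  le_ciSup (f := fun i => ∑ j, |M i j|) (Set.finite_range _).bddAbove i

lemma abs_mul_le_card {n d : ℕ} (Y : Matrix (Fin n) (Fin d) ℝ) (W : Matrix (Fin d) (Fin d) ℝ)
    {B c : ℝ} (hB : 0 ≤ B) (hY : ∀ i j, |Y i j| ≤ B) (hW : ∀ i j, |W i j| ≤ c)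
    (i : Fin n) (j : Fin d) : |(Y * W) i j| ≤ d * (B * c) := by
  rw [Matrix.mul_apply]
  calc |∑ k, Y i k * W k j| ≤ ∑ k, |Y i k * W k j| := abs_sum_le_sum_abs _ _
    _ ≤ ∑ _k : Fin d, B * c := by
        refine sum_le_sum fun k _ => ?_
        rw [abs_mul]
        exact mul_le_mul (hY i k) (hW k j) (abs_nonneg _) hB
    _ = d * (B * c) := by simp

lemma abs_pow_mul_le {n d : ℕ} (T : Matrix (Fin n) (Fin n) ℝ) (x : Matrix (Fin n) (Fin d) ℝ)
    (hx : ∀ i j, |x i j| ≤ 1) (k : ℕ) :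
    ∀ i j, |(T ^ k * x) i j| ≤ (max (rowSumNorm T) 1) ^ k := by
  induction k with
  | zero => simpa using hx
  | succ k ih =>
    intro i j
    rw [pow_succ', Matrix.mul_assoc, Matrix.mul_apply]
    have hM : 0 ≤ max (rowSumNorm T) 1 := zero_le_one.trans (le_max_right _ _)
    calc |∑ a, T i a * (T ^ k * x) a j| ≤ ∑ a, |T i a * (T ^ k * x) a j| :=
          abs_sum_le_sum_abs _ _
      _ ≤ ∑ a, |T i a| * (max (rowSumNorm T) 1) ^ k := by
          refine sum_le_sum fun a _ => ?_
          rw [abs_mul]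
          exact mul_le_mul_of_nonneg_left (ih a j) (abs_nonneg _)
      _ = (∑ a, |T i a|) * (max (rowSumNorm T) 1) ^ k := by rw [sum_mul]
      _ ≤ max (rowSumNorm T) 1 * (max (rowSumNorm T) 1) ^ k :=
          mul_le_mul_of_nonneg_right
            ((rowSum_le_rowSumNorm T i).trans (le_max_left _ _)) (pow_nonneg hM k)
      _ = (max (rowSumNorm T) 1) ^ (k + 1) := (pow_succ' _ _).symm

lemma abs_mul_wProd_le {n d L : ℕ} (Y : Matrix (Fin n) (Fin d) ℝ)
    (W : ℕ → Matrix (Fin d) (Fin d) ℝ) {B : ℝ} (hB : 0 ≤ B) (hY : ∀ i j, |Y i j| ≤ B)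
    (hW : ∀ ℓ, 1 ≤ ℓ → ℓ ≤ L → ∀ a b, |W ℓ a b| ≤ 1) (k : ℕ) (hk : k ≤ L) :
    ∀ i j, |(Y * wProd W k) i j| ≤ B * (d : ℝ) ^ k := by
  induction k with
  | zero => simpa [wProd] using hY
  | succ k ih =>
    intro i j
    rw [wProd_succ, ← Matrix.mul_assoc]
    refine (abs_mul_le_card _ _ (by positivity) (ih (by omega))
      (hW (k + 1) (by omega) hk) i j).trans_eq ?_
    ring

/-- Telescoping over the factors:
`Y Pᵍ Wᵍ - Y Pʰ Wʰ = (Y Pᵍ - Y Pʰ) Wᵍ + Y Pʰ (Wᵍ - Wʰ)`. -/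
lemma abs_mul_wProd_sub_le {n d L : ℕ} (Y : Matrix (Fin n) (Fin d) ℝ)
    (Wg Wh : ℕ → Matrix (Fin d) (Fin d) ℝ) {B ε : ℝ} (hB : 0 ≤ B) (hε : 0 ≤ ε)
    (hY : ∀ i j, |Y i j| ≤ B)
    (hWg : ∀ ℓ, 1 ≤ ℓ → ℓ ≤ L → ∀ a b, |Wg ℓ a b| ≤ 1)
    (hWh : ∀ ℓ, 1 ≤ ℓ → ℓ ≤ L → ∀ a b, |Wh ℓ a b| ≤ 1)
    (hW : ∀ ℓ, 1 ≤ ℓ → ℓ ≤ L → ∀ a b, |Wg ℓ a b - Wh ℓ a b| ≤ ε) (k : ℕ) (hk : k ≤ L) :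
    ∀ i j, |(Y * wProd Wg k - Y * wProd Wh k) i j| ≤ k * (B * (d : ℝ) ^ k * ε) := by
  induction k with
  | zero => simp [wProd]
  | succ k ih =>
    intro i j
    have hsplit : Y * wProd Wg (k + 1) - Y * wProd Wh (k + 1) =
        (Y * wProd Wg k - Y * wProd Wh k) * Wg (k + 1) +
          Y * wProd Wh k * (Wg (k + 1) - Wh (k + 1)) := by
      rw [wProd_succ, wProd_succ]
      rw [Matrix.sub_mul, Matrix.mul_sub, ← Matrix.mul_assoc, ← Matrix.mul_assoc]
      abel
    have h1 := abs_mul_le_card _ _ (by positivity) (ih (by omega))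
      (hWg (k + 1) (by omega) hk) i j
    have h2 := abs_mul_le_card _ (Wg (k + 1) - Wh (k + 1)) (by positivity)
      (abs_mul_wProd_le Y Wh hB hY hWh k (by omega)) (hW (k + 1) (by omega) hk) i j
    rw [hsplit, Matrix.add_apply]
    refine (abs_add_le _ _).trans ((add_le_add h1 h2).trans_eq ?_)
    push_cast
    ring

/-- stability of linear GCNs. If two members `g, h` of `G(L₁,T)` have weight
matrices and reweighting coefficients differing by at most `ε`, then for every `x ∈ [0,1]^{n×d}`,
`‖g(x) − h(x)‖_∞ ≤ (L₁² + L₁)(‖T‖_{1,∞} ∨ 1)^{L₁} d^{L₁} ε`. -/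
theorem stmt_10 (n d L₁ : ℕ) (T : Matrix (Fin n) (Fin n) ℝ)
    (γg γh : ℕ → ℝ) (Wg Wh : ℕ → Matrix (Fin d) (Fin d) ℝ) (ε : ℝ)
    (hWg : ∀ ℓ, 1 ≤ ℓ → ℓ ≤ L₁ → ∀ a b, Wg ℓ a b ∈ Set.Icc (-1 : ℝ) 1)
    (hWh : ∀ ℓ, 1 ≤ ℓ → ℓ ≤ L₁ → ∀ a b, Wh ℓ a b ∈ Set.Icc (-1 : ℝ) 1)
    (hγg : ∀ ℓ, 1 ≤ ℓ → ℓ ≤ L₁ → γg ℓ ∈ Set.Icc (-1 : ℝ) 1)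
    (hγh : ∀ ℓ, 1 ≤ ℓ → ℓ ≤ L₁ → γh ℓ ∈ Set.Icc (-1 : ℝ) 1)
    (hWdiff : ∀ ℓ, 1 ≤ ℓ → ℓ ≤ L₁ → ∀ a b, |Wg ℓ a b - Wh ℓ a b| ≤ ε)
    (hγdiff : ∀ ℓ, 1 ≤ ℓ → ℓ ≤ L₁ → |γg ℓ - γh ℓ| ≤ ε) :
    ∀ x : Matrix (Fin n) (Fin d) ℝ, (∀ a b, x a b ∈ Set.Icc (0 : ℝ) 1) →
      ∀ i j, |gcnFun T γg Wg L₁ x i j - gcnFun T γh Wh L₁ x i j| ≤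
        ((L₁ : ℝ) ^ 2 + L₁) * (max (rowSumNorm T) 1) ^ L₁ * (d : ℝ) ^ L₁ * ε := by
  intro x hx i j
  have hx' : ∀ a b, |x a b| ≤ 1 := fun a b =>
    abs_le.2 ⟨by linarith [(hx a b).1], (hx a b).2⟩
  have hM : 1 ≤ max (rowSumNorm T) 1 := le_max_right _ _
  -- Monotonicity of `d ^ ℓ` in `ℓ` needs `d ≠ 0`, which the column index `j` provides.
  have hd : (1 : ℝ) ≤ d := by exact_mod_cast Fin.pos j
  have hterm : ∀ ℓ ∈ Icc 1 L₁,
      |γg ℓ * (T ^ ℓ * x * wProd Wg ℓ) i j - γh ℓ * (T ^ ℓ * x * wProd Wh ℓ) i j| ≤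
        ((L₁ : ℝ) + 1) * ((max (rowSumNorm T) 1) ^ L₁ * (d : ℝ) ^ L₁ * ε) := by
    intro ℓ hℓ
    obtain ⟨h1, h2⟩ := mem_Icc.1 hℓ
    have hε : 0 ≤ ε := (abs_nonneg _).trans (hγdiff ℓ h1 h2)
    have hB : 0 ≤ (max (rowSumNorm T) 1) ^ ℓ := by positivity
    have hY := abs_pow_mul_le T x hx' ℓ
    have hWh' : ∀ ℓ, 1 ≤ ℓ → ℓ ≤ L₁ → ∀ a b, |Wh ℓ a b| ≤ 1 :=
      fun ℓ h1 h2 a b => abs_le.2 (hWh ℓ h1 h2 a b)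
    have hdiff := abs_mul_wProd_sub_le _ Wg Wh hB hε hY
      (fun ℓ h1 h2 a b => abs_le.2 (hWg ℓ h1 h2 a b)) hWh' hWdiff ℓ h2 i j
    have hprod := abs_mul_wProd_le _ Wh hB hY hWh' ℓ h2 i j
    rw [Matrix.sub_apply] at hdiff
    set p := (T ^ ℓ * x * wProd Wg ℓ) i j
    set q := (T ^ ℓ * x * wProd Wh ℓ) i j
    have hL : (ℓ : ℝ) ≤ L₁ := by exact_mod_cast h2
    calc |γg ℓ * p - γh ℓ * q| = |γg ℓ * (p - q) + (γg ℓ - γh ℓ) * q| := by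
          congr 1
          ring
      _ ≤ |γg ℓ| * |p - q| + |γg ℓ - γh ℓ| * |q| := by
          rw [← abs_mul, ← abs_mul]
          exact abs_add_le _ _
      _ ≤ 1 * (ℓ * ((max (rowSumNorm T) 1) ^ ℓ * (d : ℝ) ^ ℓ * ε)) +
            ε * ((max (rowSumNorm T) 1) ^ ℓ * (d : ℝ) ^ ℓ) :=
          add_le_add
            (mul_le_mul (abs_le.2 (hγg ℓ h1 h2)) hdiff (abs_nonneg _) zero_le_one)
            (mul_le_mul (hγdiff ℓ h1 h2) hprod (abs_nonneg _) hε)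
      _ = ((ℓ : ℝ) + 1) * ((max (rowSumNorm T) 1) ^ ℓ * (d : ℝ) ^ ℓ * ε) := by ring
      _ ≤ ((L₁ : ℝ) + 1) * ((max (rowSumNorm T) 1) ^ L₁ * (d : ℝ) ^ L₁ * ε) := by
          gcongr
  simp only [gcnFun, Matrix.sum_apply, Matrix.smul_apply, smul_eq_mul]
  rw [← sum_sub_distrib]
  refine (abs_sum_le_sum_abs _ _).trans ((sum_le_sum hterm).trans_eq ?_)
  simp only [sum_const, Nat.card_Icc, Nat.add_sub_cancel, nsmul_eq_mul]
  ring
end
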